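/- arXiv:2011.04851 — 2 statements merged into one kernel-verified Lean document; each statement's English description precedes it below -/
import Mathlib

section
/- Let A be an n×n complex matrix with Ind(A) = k and suppose A = U · [[T, S], [0, N]] · U*, where U is an n×n unitary matrix, T is an invertible r×r matrix, and N is an (n−r)×(n−r) matrix with N^k = 0. Write U* G U = [[G₁, G₂], [G₃, G₄]] with G₁ of size r×r. If G₁ is invertible, then X = U · [[T⁻¹ G₁⁻¹, 0], [0, 0]] · U* · G satisfies all four m-core-EP inverse equations for A (so X is the m-core-EP inverse of A). -/
/-!
Conjugation by the unitary `U` turns the four equations into block matrix identities. Write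
`J = [[T, S], [0, N]]`, `M = U* G U`, `Y = [[T⁻¹ G₁⁻¹, 0], [0, 0]]`; as `G = U M U*`, the
candidate is `X = U (Y M) U*` with `Y M = [[T⁻¹, T⁻¹ G₁⁻¹ G₂], [0, 0]]`. Since `N ^ k = 0`, the
power `J ^ k` has zero lower block row and invertible top-left block `T ^ k`, while `Y M J` has
block rows `[1, *]` and `[0, 0]`; this gives `X A X = X`, `X A ^ (k + 1) = A ^ k` and the range
condition. Finally `A X = Q G` with `Q = U [[G₁⁻¹, 0], [0, 0]] U*`, and `Q` is Hermitian because
`G`, hence `G₁`, is; together with `G ^ 2 = 1` this makes `A X` fixed by the Minkowski adjoint.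
-/

open Matrix

noncomputable section

/-- The Minkowski metric matrix `G = diag(1, -1, …, -1)`. -/
def mink (n : ℕ) : Matrix (Fin n) (Fin n) ℂ :=
  Matrix.diagonal (fun i => if (i : ℕ) = 0 then 1 else -1)

/-- The Minkowski adjoint `A~ = G A* G`. -/
def madj {n : ℕ} (A : Matrix (Fin n) (Fin n) ℂ) : Matrix (Fin n) (Fin n) ℂ :=
  mink n * Aᴴ * mink n

/-- `k` is the index of `A`: the smallest positive integer with
`rank (A^(k+1)) = rank (A^k)`. -/
def IsInd {n : ℕ} (A : Matrix (Fin n) (Fin n) ℂ) (k : ℕ) : Prop :=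
  0 < k ∧ (A ^ (k + 1)).rank = (A ^ k).rank ∧
    ∀ j, 0 < j → (A ^ (j + 1)).rank = (A ^ j).rank → k ≤ j

/-- `X` is an m-core-EP inverse of `A` (with `Ind(A) = k`). -/
def IsMCoreEP {n : ℕ} (A X : Matrix (Fin n) (Fin n) ℂ) (k : ℕ) : Prop :=
  X * A * X = X ∧ X * A ^ (k + 1) = A ^ k ∧ madj (A * X) = A * X ∧
    ∃ Z : Matrix (Fin n) (Fin n) ℂ, X = A ^ k * Z

/-- Regard a 2×2 block matrix with blocks of sizes `r` and `n - r` as an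
`n × n` matrix (given `r ≤ n`). -/
def embedBlocks {n r : ℕ} (hr : r ≤ n)
    (M : Matrix (Fin r ⊕ Fin (n - r)) (Fin r ⊕ Fin (n - r)) ℂ) :
    Matrix (Fin n) (Fin n) ℂ :=
  Matrix.reindex (finSumFinEquiv.trans (finCongr (Nat.add_sub_cancel' hr)))
    (finSumFinEquiv.trans (finCongr (Nat.add_sub_cancel' hr))) M

section helpers

variable {n r : ℕ} (hr : r ≤ n)

lemma embedBlocks_mul (M N : Matrix (Fin r ⊕ Fin (n - r)) (Fin r ⊕ Fin (n - r)) ℂ) :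
    embedBlocks hr (M * N) = embedBlocks hr M * embedBlocks hr N := by
  simp only [embedBlocks, Matrix.reindex_apply, Matrix.submatrix_mul_equiv]

lemma embedBlocks_one : embedBlocks hr 1 = 1 := by
  simp only [embedBlocks, Matrix.reindex_apply, Matrix.submatrix_one_equiv]

lemma embedBlocks_conjTranspose
    (M : Matrix (Fin r ⊕ Fin (n - r)) (Fin r ⊕ Fin (n - r)) ℂ) :
    (embedBlocks hr M)ᴴ = embedBlocks hr Mᴴ := by
  simp only [embedBlocks, Matrix.reindex_apply, Matrix.conjTranspose_submatrix]

lemma embedBlocks_injective : Function.Injective (embedBlocks hr) :=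
  (Matrix.reindex _ _).injective

lemma mink_conjTranspose (n : ℕ) : (mink n)ᴴ = mink n := by
  rw [mink, Matrix.diagonal_conjTranspose]
  congr 1
  ext i
  by_cases h : (i : ℕ) = 0 <;> simp [h]

lemma mink_mul_self (n : ℕ) : mink n * mink n = 1 := by
  rw [mink, Matrix.diagonal_mul_diagonal, ← Matrix.diagonal_one]
  congr 1
  ext i
  by_cases h : (i : ℕ) = 0 <;> simp [h]

/-- The `n × n` matrix `U M U*`: for unitary `U`, the operator whose block matrix in the
orthonormal basis of columns of `U` is `M`. -/
def conjBlocks (U : Matrix (Fin n) (Fin n) ℂ)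
    (M : Matrix (Fin r ⊕ Fin (n - r)) (Fin r ⊕ Fin (n - r)) ℂ) : Matrix (Fin n) (Fin n) ℂ :=
  U * embedBlocks hr M * Uᴴ

variable {U : Matrix (Fin n) (Fin n) ℂ}

lemma conjBlocks_mul (hU : Uᴴ * U = 1)
    (M N : Matrix (Fin r ⊕ Fin (n - r)) (Fin r ⊕ Fin (n - r)) ℂ) :
    conjBlocks hr U (M * N) = conjBlocks hr U M * conjBlocks hr U N := by
  have h : ∀ C : Matrix (Fin n) (Fin n) ℂ, Uᴴ * (U * C) = C := fun C => by
    rw [← Matrix.mul_assoc, hU, Matrix.one_mul]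
  simp only [conjBlocks, embedBlocks_mul, Matrix.mul_assoc, h]

lemma conjBlocks_pow (hU : Uᴴ * U = 1) (hU' : U * Uᴴ = 1)
    (M : Matrix (Fin r ⊕ Fin (n - r)) (Fin r ⊕ Fin (n - r)) ℂ) (j : ℕ) :
    conjBlocks hr U (M ^ j) = conjBlocks hr U M ^ j := by
  induction j with
  | zero => simp only [pow_zero, conjBlocks, embedBlocks_one, Matrix.mul_one, hU']
  | succ j ih => rw [pow_succ, pow_succ, conjBlocks_mul hr hU, ih]

lemma conjBlocks_conjTranspose
    (M : Matrix (Fin r ⊕ Fin (n - r)) (Fin r ⊕ Fin (n - r)) ℂ) :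
    (conjBlocks hr U M)ᴴ = conjBlocks hr U Mᴴ := by
  simp only [conjBlocks, Matrix.conjTranspose_mul, Matrix.conjTranspose_conjTranspose,
    embedBlocks_conjTranspose, Matrix.mul_assoc]

/-- Powers of a block upper triangular matrix are block upper triangular, with the powers of
the diagonal blocks on the diagonal; the off-diagonal block is left unspecified. -/
lemma fromBlocks_upper_pow {l m : Type*} [Fintype l] [Fintype m] [DecidableEq l] [DecidableEq m]
    (T : Matrix l l ℂ) (S : Matrix l m ℂ) (N : Matrix m m ℂ) (j : ℕ) :
    ∃ B, Matrix.fromBlocks T S 0 N ^ j = Matrix.fromBlocks (T ^ j) B 0 (N ^ j) := by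
  induction j with
  | zero => exact ⟨0, by simp [Matrix.fromBlocks_one]⟩
  | succ j ih =>
    obtain ⟨B, hB⟩ := ih
    exact ⟨T ^ j * S + B * N, by simp [pow_succ, hB, Matrix.fromBlocks_multiply]⟩

end helpers

/-- With `A = U [[T,S],[0,N]] U*` and `U* G U = [[G₁,G₂],[G₃,G₄]]`, if `G₁` is
invertible then `U [[T⁻¹G₁⁻¹,0],[0,0]] U* G` is the m-core-EP inverse of `A`. -/
theorem mCoreEP_block_formula {n r k : ℕ} (hr : r ≤ n)
    (A U : Matrix (Fin n) (Fin n) ℂ) (hU : U ∈ Matrix.unitaryGroup (Fin n) ℂ)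
    (T : Matrix (Fin r) (Fin r) ℂ) (S : Matrix (Fin r) (Fin (n - r)) ℂ)
    (N : Matrix (Fin (n - r)) (Fin (n - r)) ℂ)
    (G₁ : Matrix (Fin r) (Fin r) ℂ) (G₂ : Matrix (Fin r) (Fin (n - r)) ℂ)
    (G₃ : Matrix (Fin (n - r)) (Fin r) ℂ) (G₄ : Matrix (Fin (n - r)) (Fin (n - r)) ℂ)
    (hInd : IsInd A k)
    (hA : A = U * embedBlocks hr (Matrix.fromBlocks T S 0 N) * Uᴴ)
    (hT : IsUnit T) (hN : N ^ k = 0)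
    (hG : Uᴴ * mink n * U = embedBlocks hr (Matrix.fromBlocks G₁ G₂ G₃ G₄))
    (hG₁ : IsUnit G₁) :
    IsMCoreEP A (U * embedBlocks hr (Matrix.fromBlocks (T⁻¹ * G₁⁻¹) 0 0 0) * Uᴴ * mink n) k := by
  have hUU : Uᴴ * U = 1 := Matrix.mem_unitaryGroup_iff'.1 hU
  have hUU' : U * Uᴴ = 1 := Matrix.mem_unitaryGroup_iff.1 hU
  set J := Matrix.fromBlocks T S 0 N with hJ
  set M := Matrix.fromBlocks G₁ G₂ G₃ G₄ with hM
  set Y : Matrix (Fin r ⊕ Fin (n - r)) (Fin r ⊕ Fin (n - r)) ℂ :=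
    Matrix.fromBlocks (T⁻¹ * G₁⁻¹) 0 0 0 with hY
  have hTd : IsUnit T.det := (Matrix.isUnit_iff_isUnit_det T).1 hT
  have hGd : IsUnit G₁.det := (Matrix.isUnit_iff_isUnit_det G₁).1 hG₁
  have hTT : T * T⁻¹ = 1 := Matrix.mul_nonsing_inv T hTd
  have hTT' : T⁻¹ * T = 1 := Matrix.nonsing_inv_mul T hTd
  have hGG' : G₁⁻¹ * G₁ = 1 := Matrix.nonsing_inv_mul G₁ hGd
  have hGM : mink n = conjBlocks hr U M := by
    rw [conjBlocks, ← hG]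
    calc mink n = (U * Uᴴ) * mink n * (U * Uᴴ) := by
          rw [hUU', Matrix.one_mul, Matrix.mul_one]
      _ = _ := by simp only [Matrix.mul_assoc]
  have hGh : G₁ᴴ = G₁ := by
    have h : Mᴴ = M := by
      apply embedBlocks_injective hr
      rw [← embedBlocks_conjTranspose, ← hG]
      simp only [Matrix.conjTranspose_mul, Matrix.conjTranspose_conjTranspose,
        mink_conjTranspose, Matrix.mul_assoc]
    rw [hM, Matrix.fromBlocks_conjTranspose] at h
    exact (Matrix.fromBlocks_inj.1 h).1
  have hYM : Y * M = Matrix.fromBlocks T⁻¹ (T⁻¹ * G₁⁻¹ * G₂) 0 0 := by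
    rw [hY, hM, Matrix.fromBlocks_multiply]
    simp [Matrix.mul_assoc, hGG']
  have hJY : J * Y = Matrix.fromBlocks G₁⁻¹ 0 0 0 := by
    rw [hJ, hY, Matrix.fromBlocks_multiply]
    simp [← Matrix.mul_assoc, hTT]
  obtain ⟨B, hB⟩ := fromBlocks_upper_pow T S N k
  rw [← hJ, hN] at hB
  have hA' : A = conjBlocks hr U J := hA
  have hX : U * embedBlocks hr Y * Uᴴ * mink n = conjBlocks hr U (Y * M) := by
    rw [conjBlocks_mul hr hUU, ← hGM, conjBlocks]
  rw [hX]
  refine ⟨?_, ?_, ?_, ?_⟩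
  · rw [hA', ← conjBlocks_mul hr hUU, ← conjBlocks_mul hr hUU]
    congr 1
    rw [hYM, hJ, Matrix.fromBlocks_multiply, Matrix.fromBlocks_multiply]
    simp [← Matrix.mul_assoc, hTT']
  · rw [hA', ← conjBlocks_pow hr hUU hUU', ← conjBlocks_pow hr hUU hUU',
      ← conjBlocks_mul hr hUU]
    congr 1
    rw [pow_succ', ← Matrix.mul_assoc, hB, hYM, hJ, Matrix.fromBlocks_multiply,
      Matrix.fromBlocks_multiply]
    simp [hTT']
  · -- `A X = Q G` with `Q = U (J Y) U*` Hermitian, so `(A X)~ = G (G Q) G = Q G`.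
    have hAX : A * conjBlocks hr U (Y * M) = conjBlocks hr U (J * Y) * mink n := by
      rw [hA', hGM, ← conjBlocks_mul hr hUU, ← conjBlocks_mul hr hUU, Matrix.mul_assoc]
    have hQ : (conjBlocks hr U (J * Y))ᴴ = conjBlocks hr U (J * Y) := by
      rw [conjBlocks_conjTranspose, hJY, Matrix.fromBlocks_conjTranspose,
        Matrix.conjTranspose_nonsing_inv, hGh]
      simp only [Matrix.conjTranspose_zero]
    rw [madj, hAX, Matrix.conjTranspose_mul, hQ, mink_conjTranspose, ← Matrix.mul_assoc,
      mink_mul_self, Matrix.one_mul]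
  · -- The lower block row of `J ^ k` vanishes, so multiplying by `(T ^ k)⁻¹` on the top-left block
    -- recovers every matrix whose lower block row is zero, in particular `Y M`.
    refine ⟨conjBlocks hr U (Matrix.fromBlocks (T ^ k)⁻¹ 0 0 0 * (Y * M)), ?_⟩
    have hTk : T ^ k * (T ^ k)⁻¹ = 1 :=
      Matrix.mul_nonsing_inv _ ((Matrix.isUnit_iff_isUnit_det _).1 (hT.pow k))
    rw [hA', ← conjBlocks_pow hr hUU hUU', ← conjBlocks_mul hr hUU]
    congr 1
    rw [← Matrix.mul_assoc, hB, hYM, Matrix.fromBlocks_multiply, Matrix.fromBlocks_multiply]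
    simp [hTk]
end
end

section
/- Let A be an n×n complex matrix with Ind(A) = k, let A = Â₁ + Â₂ be an m-core-EP decomposition of A, and let Y be an m-core inverse of Â₁. Then Y is the m-core-EP inverse of A, i.e., Y satisfies the four m-core-EP inverse equations for A. -/
/-!
Write `B = A₁`, `N = A₂`. As `rank (B²) = rank B`, the matrix `B` is injective on its own column
space, so a matrix `B * X` vanishes as soon as `B * (B * X)` does. Since `Y = B * Y²`, this cancels a
left factor `B` and yields `Y * B * Y = Y`, `Y * B² = B` and, because `B * Y` is its own Minkowski
adjoint and `B~ * N = 0`, also `Y * N = 0`. Moreover `N * Y = N * B * Y² = 0`, whence `A * Y = B * Y`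
and `Y * A = Y * B`. Finally `N * B = 0` and `N ^ k = 0` place the columns of `A ^ k` in the column
space of `B`, on which `Y * B` is the identity, and iterating `Y = A * Y²` gives
`Y = A ^ k * Y ^ (k + 1)`.
-/

open Matrix

noncomputable section

/-- `Y` is an m-core inverse of `B`. -/
def IsMCore {n : ℕ} (B Y : Matrix (Fin n) (Fin n) ℂ) : Prop :=
  B * Y * B = B ∧ B * Y ^ 2 = Y ∧ madj (B * Y) = B * Y

/-- `A = A₁ + A₂` is an m-core-EP decomposition of `A` (with `Ind(A) = k`). -/
def IsMCoreEPDecomp {n : ℕ} (A A₁ A₂ : Matrix (Fin n) (Fin n) ℂ) (k : ℕ) : Prop :=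
  A = A₁ + A₂ ∧ (A₁ ^ 2).rank = A₁.rank ∧ (madj A₁ * A₁).rank = A₁.rank ∧
    A₂ ^ k = 0 ∧ madj A₁ * A₂ = 0 ∧ A₂ * A₁ = 0

/-- If `rank (B²) = rank B`, then `B` and `B²` have the same kernel; here `X` plays the role of a
family of columns. -/
theorem mul_eq_zero_of_rank_sq {n : ℕ} {B X : Matrix (Fin n) (Fin n) ℂ}
    (hB : (B ^ 2).rank = B.rank) (h : B * (B * X) = 0) : B * X = 0 := by
  have hle : LinearMap.ker B.mulVecLin ≤ LinearMap.ker (B ^ 2).mulVecLin := by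
    intro v hv
    simp only [LinearMap.mem_ker, mulVecLin_apply] at hv ⊢
    rw [sq, ← mulVec_mulVec, hv, mulVec_zero]
  have h1 := LinearMap.finrank_range_add_finrank_ker B.mulVecLin
  have h2 := LinearMap.finrank_range_add_finrank_ker (B ^ 2).mulVecLin
  have heq := Submodule.eq_of_le_of_finrank_eq hle (by
    unfold Matrix.rank at hB
    omega)
  refine Matrix.ext_of_mulVec_single fun i => ?_
  have hm : X *ᵥ Pi.single i 1 ∈ LinearMap.ker (B ^ 2).mulVecLin := by
    rw [LinearMap.mem_ker, mulVecLin_apply, mulVec_mulVec, sq, mul_assoc, h, zero_mulVec]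
  rw [← heq, LinearMap.mem_ker, mulVecLin_apply, mulVec_mulVec] at hm
  rw [hm, zero_mulVec]

theorem madj_mul {n : ℕ} (A B : Matrix (Fin n) (Fin n) ℂ) :
    madj (A * B) = madj B * madj A := by
  have hG : mink n * mink n = 1 := by
    rw [mink, diagonal_mul_diagonal, ← diagonal_one]
    congr 1
    funext i
    split_ifs <;> norm_num
  simp only [madj, conjTranspose_mul, mul_assoc]
  rw [← mul_assoc (mink n) (mink n), hG, one_mul]

/-- When `N * B = 0`, only the term `N ^ j` in the expansion of `(B + N) ^ j` does not start
with `B`. -/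
theorem exists_add_pow_eq {R : Type*} [Ring R] {B N : R} (h : N * B = 0) (j : ℕ) :
    ∃ M, (B + N) ^ j = B * M + N ^ j := by
  induction j with
  | zero => exact ⟨0, by simp⟩
  | succ j ih =>
    obtain ⟨M, hM⟩ := ih
    refine ⟨(B + N) ^ j, ?_⟩
    rw [pow_succ' (B + N), add_mul, pow_succ' N]
    congr 1
    rw [hM, mul_add, ← mul_assoc, h, zero_mul, zero_add]

/-- If `A = Â₁ + Â₂` is an m-core-EP decomposition of `A`, then any m-core
inverse of `Â₁` is the m-core-EP inverse of `A`. -/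
theorem mCoreEP_eq_mcore_of_mCoreEPDecomp {n k : ℕ}
    (A A₁ A₂ Y : Matrix (Fin n) (Fin n) ℂ) (hk : IsInd A k)
    (hdec : IsMCoreEPDecomp A A₁ A₂ k)
    (hY : IsMCore A₁ Y) :
    IsMCoreEP A Y k := by
  obtain ⟨rfl, hr, -, hN, hBN, hNB⟩ := hdec
  obtain ⟨h1, h2, h3⟩ := hY
  have hNY : A₂ * Y = 0 := by
    rw [← h2, ← mul_assoc, hNB, zero_mul]
  have hAY : (A₁ + A₂) * Y = A₁ * Y := by rw [add_mul, hNY, add_zero]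
  have h2' : A₁ * (Y * Y) = Y := by rw [← sq, h2]
  have hBYN : A₁ * Y * A₂ = 0 := by
    rw [← h3, madj_mul, mul_assoc, hBN, mul_zero]
  have hYN : Y * A₂ = 0 := by
    have : A₁ * (Y * Y * A₂) = 0 := by
      apply mul_eq_zero_of_rank_sq hr
      rw [← mul_assoc A₁ (Y * Y), h2', ← mul_assoc, hBYN]
    rwa [← mul_assoc, h2'] at this
  have hYBY : Y * A₁ * Y = Y := by
    have : A₁ * (Y * Y * (A₁ * Y) - Y * Y) = 0 := by
      apply mul_eq_zero_of_rank_sq hr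
      rw [mul_sub, ← mul_assoc A₁ (Y * Y), h2', mul_sub, ← mul_assoc, ← mul_assoc, h1, sub_self]
    rw [mul_sub, ← mul_assoc A₁ (Y * Y), h2', sub_eq_zero] at this
    rw [mul_assoc, this]
  have hYBB : Y * (A₁ * A₁) = A₁ := by
    have : A₁ * (Y * Y * (A₁ * A₁) - Y * A₁) = 0 := by
      apply mul_eq_zero_of_rank_sq hr
      rw [mul_sub, ← mul_assoc A₁ (Y * Y), h2', ← mul_assoc A₁ Y A₁, h1, mul_sub, ← mul_assoc,
        ← mul_assoc, h1, sub_self]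
    rwa [mul_sub, ← mul_assoc A₁ (Y * Y), h2', ← mul_assoc A₁ Y A₁, h1, sub_eq_zero] at this
  have hYA : Y * (A₁ + A₂) = Y * A₁ := by rw [mul_add, hYN, add_zero]
  refine ⟨by rw [hYA, hYBY], ?_, by rw [hAY, h3], Y ^ (k + 1), ?_⟩
  · obtain ⟨M, hM⟩ := exists_add_pow_eq hNB k
    rw [hN, add_zero] at hM
    rw [pow_succ', ← mul_assoc, hYA, hM, ← mul_assoc, mul_assoc Y, hYBB]
  · clear hN hk
    induction k with
    | zero => simp
    | succ k ih =>
      have hAYY : (A₁ + A₂) * Y ^ (k + 1 + 1) = Y ^ (k + 1) := by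
        rw [pow_succ' Y (k + 1), ← mul_assoc, hAY, pow_succ' Y k, ← mul_assoc, mul_assoc A₁, h2']
      rw [pow_succ (A₁ + A₂), mul_assoc, hAYY]
      exact ih
end
end
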